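/- There exists a 2-(24,4,1) packing with 42 blocks whose leave is a vertex-disjoint union of one cycle of length 3 and three cycles of length 7, covering all 24 points (leave type 3^1 7^3). -/

import Mathlib

/-!
The packing is invariant under the cyclic group of order seven. The points are split into three
rows `R₀, R₁, R₂`, each a copy of `ℤ/7`, and three fixed points `∞₀, ∞₁, ∞₂`, and the 42 blocks are
the translates of six base blocks.

Three base blocks are `{0, 2} ⊆ Rᵢ` together with `{y, y + 3} ⊆ Rᵢ₊₁` (row index modulo 3,
`y = 0, 0, 2`). They use the differences `±2` and `±3` inside every row, together with four of the
seven differences between any two rows. The other three base blocks consist of one fixed point and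
one point of each row, chosen to use the three remaining differences between any two rows. So no
difference occurs twice, and the uncovered pairs are those at difference `±1` inside a row (three
7-cycles) and the pairs of fixed points (one 3-cycle). Since everything is explicit and finite, the
required properties are verified by evaluation.
-/

/-- A 2-(24,4,1) packing: a collection of 4-element blocks on 24 points such that
every pair of distinct points lies in at most one block. -/
def IsPacking (B : Finset (Finset (Fin 24))) : Prop :=
  (∀ b ∈ B, b.card = 4) ∧
  ∀ p q : Fin 24, p ≠ q → ∀ b₁ ∈ B, ∀ b₂ ∈ B,
    p ∈ b₁ → q ∈ b₁ → p ∈ b₂ → q ∈ b₂ → b₁ = b₂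

/-- Adjacency in the leave of a packing: the pair of distinct points is covered by no block. -/
def LeaveAdj (B : Finset (Finset (Fin 24))) (p q : Fin 24) : Prop :=
  p ≠ q ∧ ∀ b ∈ B, ¬ (p ∈ b ∧ q ∈ b)

/-- The leave of the packing `B` is a vertex-disjoint union of cycles whose lengths are
given by the list `L`, covering all 24 points. -/
def LeaveIsCycleType (B : Finset (Finset (Fin 24))) (L : List ℕ) : Prop :=
  ∃ f : (i : Fin L.length) → ZMod (L.get i) → Fin 24,
    Function.Bijective (fun x : Σ i : Fin L.length, ZMod (L.get i) => f x.1 x.2) ∧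
    ∀ p q : Fin 24, LeaveAdj B p q ↔
      ∃ i k, (p = f i k ∧ q = f i (k + 1)) ∨ (q = f i k ∧ p = f i (k + 1))

/-- The element `x mod 7` of row `i`; row `i` occupies the numbers `7 i, …, 7 i + 6`, and
the numbers `21, 22, 23` are the fixed points. -/
def rowPt (i : Fin 3) (x : ℕ) : Fin 24 := ⟨7 * i.val + x % 7, by omega⟩

/-- The set `{a, b, c, d}` as a binary number: bit `p` is set exactly if `p` is in the set. -/
def code (a b c d : Fin 24) : ℕ := 2 ^ a.val ||| 2 ^ b.val ||| 2 ^ c.val ||| 2 ^ d.val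

/-- The codes of the translates by `t` of the six base blocks. -/
def translates (t : ℕ) : List ℕ :=
  [code (rowPt 0 t) (rowPt 0 (t + 2)) (rowPt 1 t) (rowPt 1 (t + 3)),
   code (rowPt 1 t) (rowPt 1 (t + 2)) (rowPt 2 t) (rowPt 2 (t + 3)),
   code (rowPt 2 t) (rowPt 2 (t + 2)) (rowPt 0 (t + 2)) (rowPt 0 (t + 5)),
   code 21 (rowPt 0 t) (rowPt 1 (t + 2)) (rowPt 2 (t + 6)),
   code 22 (rowPt 0 t) (rowPt 1 (t + 4)) (rowPt 2 (t + 3)),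
   code 23 (rowPt 0 t) (rowPt 1 (t + 6)) (rowPt 2 (t + 1))]

/-- The codes of the 42 blocks. -/
def blockCodes : List ℕ := (List.range 7).flatMap translates

/-- The set of points with a given code. -/
def decode (m : ℕ) : Finset (Fin 24) := {p | m.testBit p.val = true}

lemma mem_decode {m : ℕ} {p : Fin 24} : p ∈ decode m ↔ m.testBit p.val = true := by
  simp [decode]

/-- The 42 blocks of the packing. -/
def packing : Finset (Finset (Fin 24)) := blockCodes.toFinset.image decode

lemma mem_packing {b : Finset (Fin 24)} : b ∈ packing ↔ ∃ m ∈ blockCodes, decode m = b := by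
  simp [packing]

/-- The evaluated codes, one line per translation; they keep the evaluations below fast. -/
lemma blockCodes_eq : blockCodes =
  [1157, 148096, 81956, 3146241, 4327425, 8429569,
   2314, 296192, 163912, 2114562, 4460546, 8454274,
   4628, 592384, 327697, 2131972, 4726788, 8519940,
   9256, 1184768, 655394, 2166792, 5243016, 8651272,
   2256, 288768, 1310788, 2236432, 4210960, 8913936,
   4385, 561280, 540681, 2359456, 4227616, 9439264,
   8770, 1122560, 1081362, 2621760, 4260928, 8409152] := by
  decide +kernel

/-- The codes in `l` of the sets that contain both `p` and `q`. -/
def covering (l : List ℕ) (p q : Fin 24) : List ℕ :=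
  l.filter fun m => m.testBit p.val && m.testBit q.val

lemma mem_covering {l : List ℕ} {p q : Fin 24} {m : ℕ} :
    m ∈ covering l p q ↔ m ∈ l ∧ p ∈ decode m ∧ q ∈ decode m := by
  simp [covering, mem_decode]

lemma covering_unique : ∀ p q : Fin 24, p ≠ q →
    ∀ m₁ ∈ covering blockCodes p q, ∀ m₂ ∈ covering blockCodes p q, m₁ = m₂ := by
  rw [blockCodes_eq]
  decide +kernel

lemma card_decode : ∀ m ∈ blockCodes, (decode m).card = 4 := by
  rw [blockCodes_eq]
  decide +kernel

lemma packing_isPacking : IsPacking packing := by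
  refine ⟨fun b hb => ?_, fun p q hpq b₁ h₁ b₂ h₂ hp₁ hq₁ hp₂ hq₂ => ?_⟩
  · obtain ⟨m, hm, rfl⟩ := mem_packing.mp hb
    exact card_decode m hm
  · obtain ⟨m₁, hm₁, rfl⟩ := mem_packing.mp h₁
    obtain ⟨m₂, hm₂, rfl⟩ := mem_packing.mp h₂
    rw [covering_unique p q hpq m₁ (mem_covering.mpr ⟨hm₁, hp₁, hq₁⟩) m₂
      (mem_covering.mpr ⟨hm₂, hp₂, hq₂⟩)]

lemma packing_card : packing.card = 42 := by
  have hcodes : blockCodes.toFinset.card = 42 := by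
    rw [blockCodes_eq]
    decide +kernel
  rw [packing, Finset.card_image_of_injOn, hcodes]
  -- A block has two distinct points, and these determine its code.
  intro m₁ hm₁ m₂ hm₂ h
  simp only [List.coe_toFinset, Set.mem_ofPred_eq] at hm₁ hm₂
  obtain ⟨p, hp, q, hq, hpq⟩ := Finset.one_lt_card.mp
    (show 1 < (decode m₁).card by rw [card_decode m₁ hm₁]; decide)
  exact covering_unique p q hpq m₁ (mem_covering.mpr ⟨hm₁, hp, hq⟩) m₂
    (mem_covering.mpr ⟨hm₂, h ▸ hp, h ▸ hq⟩)

/-- The cycles of the leave: the fixed points, then the three rows in their natural order. -/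
def leaveCycle : (i : Fin [3, 7, 7, 7].length) → ZMod ([3, 7, 7, 7].get i) → Fin 24
  | 0 => fun k : Fin 3 => ⟨21 + k.val, by omega⟩
  | 1 => fun k : Fin 7 => rowPt 0 k.val
  | 2 => fun k : Fin 7 => rowPt 1 k.val
  | 3 => fun k : Fin 7 => rowPt 2 k.val

/-- All cycle lengths are nonzero, so the index types `ZMod` are finite and quantifiers over them
can be evaluated. -/
instance leaveCycleNeZero : (i : Fin [3, 7, 7, 7].length) → NeZero ([3, 7, 7, 7].get i)
  | 0 => ⟨by decide⟩
  | 1 => ⟨by decide⟩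
  | 2 => ⟨by decide⟩
  | 3 => ⟨by decide⟩

lemma leaveCycle_bijective : Function.Bijective
    (fun x : Σ i : Fin [3, 7, 7, 7].length, ZMod ([3, 7, 7, 7].get i) =>
      leaveCycle x.1 x.2) := by
  have hsurj : ∀ p : Fin 24, ∃ i k, leaveCycle i k = p := by decide +kernel
  have hinj : ∀ i k j l, leaveCycle i k = leaveCycle j l →
      (⟨i, k⟩ : Σ i : Fin [3, 7, 7, 7].length, ZMod ([3, 7, 7, 7].get i)) = ⟨j, l⟩ := by
    decide +kernel
  refine ⟨fun ⟨i, k⟩ ⟨j, l⟩ h => hinj i k j l h, fun p => ?_⟩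
  obtain ⟨i, k, h⟩ := hsurj p
  exact ⟨⟨i, k⟩, h⟩

lemma covering_eq_nil_iff : ∀ p q : Fin 24, (p ≠ q ∧ covering blockCodes p q = []) ↔
    ∃ i k, (p = leaveCycle i k ∧ q = leaveCycle i (k + 1)) ∨
      (q = leaveCycle i k ∧ p = leaveCycle i (k + 1)) := by
  rw [blockCodes_eq]
  decide +kernel

lemma leaveAdj_packing_iff (p q : Fin 24) : LeaveAdj packing p q ↔
    ∃ i k, (p = leaveCycle i k ∧ q = leaveCycle i (k + 1)) ∨
      (q = leaveCycle i k ∧ p = leaveCycle i (k + 1)) := by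
  rw [← covering_eq_nil_iff, LeaveAdj, List.eq_nil_iff_forall_not_mem]
  simp [mem_packing, mem_covering]

/-- There is a 2-(24,4,1) packing with 42 blocks whose leave is a vertex-disjoint
union of cycles of lengths [3, 7, 7, 7], covering all 24 points. -/
theorem exists_max_packing_with_leave_type :
    ∃ B : Finset (Finset (Fin 24)), IsPacking B ∧ B.card = 42 ∧
      LeaveIsCycleType B [3, 7, 7, 7] :=
  ⟨packing, packing_isPacking, packing_card,
    leaveCycle, leaveCycle_bijective, leaveAdj_packing_iff⟩
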